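/- For Ω ⊆ ℝⁿ define I(Ω) = {q ∈ ℝ[x₁,…,xₙ] : q(ω) = 0 for all ω ∈ Ω} and C(Ω) = {p ∈ ℝ[x₁,…,xₙ] : q(∂₁,…,∂ₙ)p = 0 for all q ∈ I(Ω)}. Let Ω and Ω' be subsets of ℝⁿ closed under scalar multiplication. If C(Ω) is a proper subset of C(Ω'), then the closure of the set of functions of polynomials in C(Ω) is a proper subset of the closure of the set of functions of polynomials in C(Ω'), where closures are taken in the space of continuous functions on ℝⁿ with the topology of uniform convergence on compact sets. -/

import Mathlib

/-!
If a polynomial `p` is not in `C(Ω)`, some `q ∈ I(Ω)` has `q(∂)p ≠ 0`, so there is a test function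
`ψ` (smooth, compactly supported) with `∫ (q(∂)p) ψ ≠ 0`. Integrating by parts, there is a test
function `ψ'` (namely `q(-∂)ψ`) such that `∫ (q(∂)r) ψ = ∫ r ψ'` for every polynomial `r`. The
functional `f ↦ ∫ f ψ'` is continuous for uniform convergence on compact sets and kills `C(Ω)`,
hence its closure, but it does not kill `p`. Thus the polynomials in the closure of `C(Ω)` are
exactly those of `C(Ω)`, and a polynomial in `C(Ω') \ C(Ω)` witnesses strictness.
-/

open MvPolynomial

/-- The iterated formal partial derivative operator `∂^α` on multivariate polynomials. -/
noncomputable def pderivPow (n : ℕ) (α : Fin n →₀ ℕ) :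
    Module.End ℝ (MvPolynomial (Fin n) ℝ) :=
  ((List.finRange n).map fun i => ((pderiv i : Derivation ℝ _ _).toLinearMap) ^ (α i)).prod

/-- The constant-coefficient differential operator `q(∂₁, …, ∂ₙ)` applied to `p`. -/
noncomputable def diffOp (n : ℕ) (q p : MvPolynomial (Fin n) ℝ) : MvPolynomial (Fin n) ℝ :=
  ∑ α ∈ q.support, q.coeff α • pderivPow n α p

/-- The vanishing ideal `I(Ω)` of a subset `Ω ⊆ ℝⁿ`, as a set of polynomials. -/
def vanishSet (n : ℕ) (Ω : Set (Fin n → ℝ)) : Set (MvPolynomial (Fin n) ℝ) :=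
  {q | ∀ ω ∈ Ω, MvPolynomial.eval ω q = 0}

/-- `C(Ω)`: the polynomials annihilated by `q(∂)` for every `q ∈ I(Ω)`. -/
def cSet (n : ℕ) (Ω : Set (Fin n → ℝ)) : Set (MvPolynomial (Fin n) ℝ) :=
  {p | ∀ q ∈ vanishSet n Ω, diffOp n q p = 0}

open MeasureTheory in
/-- The operator `T` has a transpose on test functions: every smooth compactly supported `ψ` admits
a smooth compactly supported `ψ'` with `∫ (T p) ψ = ∫ p ψ'` for all polynomials `p`. -/
def HasTranspose {n : ℕ} (T : Module.End ℝ (MvPolynomial (Fin n) ℝ)) : Prop :=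
  ∀ ψ : (Fin n → ℝ) → ℝ, ContDiff ℝ (⊤ : ℕ∞) ψ → HasCompactSupport ψ →
    ∃ ψ' : (Fin n → ℝ) → ℝ, ContDiff ℝ (⊤ : ℕ∞) ψ' ∧ HasCompactSupport ψ' ∧
      ∀ p, ∫ x, eval x (T p) * ψ x = ∫ x, eval x p * ψ' x

theorem integrable_eval_mul {n : ℕ} (p : MvPolynomial (Fin n) ℝ) {ψ : (Fin n → ℝ) → ℝ}
    (h : Continuous ψ) (hc : HasCompactSupport ψ) :
    MeasureTheory.Integrable fun x => eval x p * ψ x :=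
  ((continuous_eval p).mul h).integrable_of_hasCompactSupport hc.mul_left

theorem hasLineDerivAt_eval {n : ℕ} (i : Fin n) (p : MvPolynomial (Fin n) ℝ) (x : Fin n → ℝ) :
    HasLineDerivAt ℝ (fun y => eval y p) (eval x (pderiv i p)) x (Pi.single i 1) := by
  unfold HasLineDerivAt
  induction p using MvPolynomial.induction_on with
  | C a => simpa using hasDerivAt_const (0 : ℝ) a
  | add p q hp hq => simpa using hp.fun_add hq
  | mul_X p j hp =>
    have hX : HasDerivAt (fun t : ℝ => (x + t • (Pi.single i 1 : Fin n → ℝ)) j)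
        ((Pi.single i 1 : Fin n → ℝ) j) 0 := by
      simpa using ((hasDerivAt_id (0 : ℝ)).mul_const ((Pi.single i 1 : Fin n → ℝ) j)).const_add
        (x j)
    have := hp.fun_mul hX
    simp only [map_mul, eval_X, Derivation.leibniz, pderiv_X, smul_eq_mul, map_add]
    refine HasDerivAt.congr_deriv this ?_
    have h0 : x + (0 : ℝ) • (Pi.single i 1 : Fin n → ℝ) = x := by simp
    rw [h0]
    by_cases hij : i = j
    · subst hij; simp only [Pi.single_eq_same, map_one]; ring
    · simp only [Pi.single_apply, Ne.symm hij, if_false, map_zero]; ring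

theorem hasTranspose_pderiv {n : ℕ} (i : Fin n) :
    HasTranspose ((pderiv i : Derivation ℝ (MvPolynomial (Fin n) ℝ) _).toLinearMap) := by
  intro ψ hψ hc
  have hd : ContDiff ℝ (⊤ : ℕ∞) fun x => fderiv ℝ ψ x (Pi.single i 1) :=
    (hψ.fderiv_right (m := (⊤ : ℕ∞)) (by simp)).clm_apply contDiff_const
  have hdc : HasCompactSupport fun x => fderiv ℝ ψ x (Pi.single i 1) :=
    hc.fderiv_apply (𝕜 := ℝ) _
  refine ⟨fun x => -fderiv ℝ ψ x (Pi.single i 1), hd.neg, hdc.neg, fun p => ?_⟩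
  have := integral_bilinear_hasLineDerivAt_right_eq_neg_left_of_integrable
    (μ := (MeasureTheory.volume : MeasureTheory.Measure (Fin n → ℝ)))
    (f := fun y => eval y p) (f' := fun y => eval y (pderiv i p))
    (g := ψ) (g' := fun x => fderiv ℝ ψ x (Pi.single i 1)) (v := Pi.single i 1)
    (B := ContinuousLinearMap.mul ℝ ℝ)
    (integrable_eval_mul _ hψ.continuous hc) (integrable_eval_mul _ hd.continuous hdc)
    (integrable_eval_mul _ hψ.continuous hc) (fun x _ => hasLineDerivAt_eval i p x)
    (fun x _ => (hψ.differentiable (by simp) x).hasFDerivAt.hasLineDerivAt _)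
  simp only [ContinuousLinearMap.mul_apply'] at this
  simp [mul_neg, MeasureTheory.integral_neg, this]

theorem hasTranspose_one {n : ℕ} : HasTranspose (1 : Module.End ℝ (MvPolynomial (Fin n) ℝ)) :=
  fun ψ h hc => ⟨ψ, h, hc, fun _ => rfl⟩

theorem HasTranspose.mul {n : ℕ} {S T : Module.End ℝ (MvPolynomial (Fin n) ℝ)}
    (hS : HasTranspose S) (hT : HasTranspose T) : HasTranspose (S * T) := by
  intro ψ h hc
  obtain ⟨ψ₁, h₁, hc₁, e₁⟩ := hS ψ h hc
  obtain ⟨ψ₂, h₂, hc₂, e₂⟩ := hT ψ₁ h₁ hc₁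
  exact ⟨ψ₂, h₂, hc₂, fun p => (e₁ (T p)).trans (e₂ p)⟩

theorem HasTranspose.pow {n : ℕ} {S : Module.End ℝ (MvPolynomial (Fin n) ℝ)}
    (hS : HasTranspose S) (k : ℕ) : HasTranspose (S ^ k) := by
  induction k with
  | zero => exact hasTranspose_one
  | succ k ih => rw [pow_succ]; exact ih.mul hS

theorem hasTranspose_pderivPow (n : ℕ) (α : Fin n →₀ ℕ) : HasTranspose (pderivPow n α) := by
  unfold pderivPow
  induction List.finRange n with
  | nil => exact hasTranspose_one
  | cons i l ih =>
    rw [List.map_cons, List.prod_cons]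
    exact ((hasTranspose_pderiv i).pow _).mul ih

theorem HasTranspose.sum_smul {n : ℕ} {ι : Type*} (s : Finset ι) (c : ι → ℝ)
    {T : ι → Module.End ℝ (MvPolynomial (Fin n) ℝ)} (hT : ∀ i, HasTranspose (T i)) :
    HasTranspose (∑ i ∈ s, c i • T i) := by
  intro ψ h hc
  choose φ hφ hφc e using fun i => hT i ψ h hc
  refine ⟨fun x => ∑ i ∈ s, c i * φ i x, ContDiff.sum fun i _ => contDiff_const.mul (hφ i), ?_,
    fun p => ?_⟩
  · classical
    induction s using Finset.induction_on with
    | empty => simp only [Finset.sum_empty]; exact HasCompactSupport.zero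
    | insert a s ha ih =>
      simp only [Finset.sum_insert ha]
      exact ((hφc a).mul_left (f := fun _ => c a)).add ih
  · simp only [LinearMap.sum_apply, LinearMap.smul_apply, map_sum, smul_eval, Finset.sum_mul,
      Finset.mul_sum, mul_assoc, mul_left_comm _ (c _)]
    rw [MeasureTheory.integral_finsetSum, MeasureTheory.integral_finsetSum]
    · simp only [MeasureTheory.integral_const_mul, e]
    · exact fun i _ => (integrable_eval_mul p (hφ i).continuous (hφc i)).const_mul _
    · exact fun i _ => (integrable_eval_mul _ h.continuous hc).const_mul _

theorem exists_transpose_diffOp {n : ℕ} (q : MvPolynomial (Fin n) ℝ) {ψ : (Fin n → ℝ) → ℝ}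
    (h : ContDiff ℝ (⊤ : ℕ∞) ψ) (hc : HasCompactSupport ψ) :
    ∃ ψ' : (Fin n → ℝ) → ℝ, ContDiff ℝ (⊤ : ℕ∞) ψ' ∧ HasCompactSupport ψ' ∧
      ∀ p, ∫ x, eval x (diffOp n q p) * ψ x = ∫ x, eval x p * ψ' x := by
  obtain ⟨ψ', h', hc', e⟩ :=
    HasTranspose.sum_smul q.support (fun α => q.coeff α) (hasTranspose_pderivPow n) ψ h hc
  exact ⟨ψ', h', hc', fun p => by rw [← e p]; simp [diffOp]⟩

/-- Pairing with a compactly supported continuous function is continuous in the topology of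
uniform convergence on compact sets. -/
theorem continuous_integral_mul {n : ℕ} {ψ : (Fin n → ℝ) → ℝ} (h : Continuous ψ)
    (hc : HasCompactSupport ψ) : Continuous fun f : C(Fin n → ℝ, ℝ) => ∫ x, f x * ψ x := by
  rw [← continuousOn_univ]
  refine continuousOn_integral_of_compact_support hc.isCompact ?_ ?_
  · exact ((ContinuousEval.continuous_eval (F := C(Fin n → ℝ, ℝ))).mul
      (h.comp continuous_snd)).continuousOn
  · intro f x _ hx
    simp [image_eq_zero_of_notMem_tsupport hx]

/-- A nonzero polynomial is detected by a test function. -/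
theorem exists_integral_eval_mul_ne_zero {n : ℕ} {p : MvPolynomial (Fin n) ℝ} (hp : p ≠ 0) :
    ∃ ψ : (Fin n → ℝ) → ℝ, ContDiff ℝ (⊤ : ℕ∞) ψ ∧ HasCompactSupport ψ ∧
      ∫ x, eval x p * ψ x ≠ 0 := by
  by_contra! hψ
  have hae := ae_eq_zero_of_integral_contDiff_smul_eq_zero
    (μ := (MeasureTheory.volume : MeasureTheory.Measure (Fin n → ℝ)))
    (continuous_eval p).locallyIntegrable
    fun g hg hgc => by simpa [mul_comm] using hψ g hg hgc
  have h0 : (fun x => eval x p) = fun _ => 0 :=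
    (Continuous.ae_eq_iff_eq MeasureTheory.volume (continuous_eval p) continuous_const).1 hae
  exact hp (MvPolynomial.funext fun x => by simpa using congrFun h0 x)

/-- Every polynomial function in the closure of `C(Ω)` comes from `C(Ω)`. -/
theorem mem_cSet_of_mem_closure {n : ℕ} {Ω : Set (Fin n → ℝ)} {p : MvPolynomial (Fin n) ℝ}
    {f : C(Fin n → ℝ, ℝ)} (hf : ∀ x, f x = eval x p)
    (hcl : f ∈ closure {g : C(Fin n → ℝ, ℝ) | ∃ p ∈ cSet n Ω, ∀ x, g x = eval x p}) :
    p ∈ cSet n Ω := by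
  intro q hq
  by_contra hne
  obtain ⟨ψ, h, hc, hψ⟩ := exists_integral_eval_mul_ne_zero hne
  obtain ⟨ψ', h', hc', e⟩ := exists_transpose_diffOp q h hc
  have hker : f ∈ {g : C(Fin n → ℝ, ℝ) | ∫ x, g x * ψ' x = 0} := by
    refine closure_minimal ?_
      (isClosed_eq (continuous_integral_mul h'.continuous hc') continuous_const) hcl
    rintro g ⟨r, hr, hg⟩
    simp [hg, ← e r, hr q hq]
  apply hψ
  rw [e p]
  simpa [hf] using hker

/-- Let `Ω, Ω' ⊆ ℝⁿ` be closed under scalar multiplication. If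
`C(Ω) ⊊ C(Ω')`, then the closure (uniform convergence on compact sets) of the set of functions
of polynomials in `C(Ω)` is a proper subset of the closure of the set of functions of
polynomials in `C(Ω')`. -/
theorem stmt_9 (n : ℕ) (Ω Ω' : Set (Fin n → ℝ))
    (hΩ : ∀ (t : ℝ), ∀ ω ∈ Ω, t • ω ∈ Ω)
    (hΩ' : ∀ (t : ℝ), ∀ ω ∈ Ω', t • ω ∈ Ω')
    (hss : cSet n Ω ⊂ cSet n Ω') :
    closure {g : C(Fin n → ℝ, ℝ) |
        ∃ p ∈ cSet n Ω, ∀ x, g x = MvPolynomial.eval x p} ⊂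
      closure {g : C(Fin n → ℝ, ℝ) |
        ∃ p ∈ cSet n Ω', ∀ x, g x = MvPolynomial.eval x p} := by
  obtain ⟨hsub, hne⟩ := hss
  refine ⟨closure_mono fun g ⟨p, hp, hg⟩ => ⟨p, hsub hp, hg⟩, fun hcl => hne fun p hp => ?_⟩
  exact mem_cSet_of_mem_closure (f := ⟨fun x => MvPolynomial.eval x p, continuous_eval p⟩)
    (fun _ => rfl) (hcl (subset_closure ⟨p, hp, fun _ => rfl⟩))
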